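/- arXiv:1401.4532 — 2 statements merged into one kernel-verified Lean document; each statement's English description precedes it below -/
import Mathlib

section
/- Output symmetry of the first equivalent channel: for every σ > 0 and integer r ≥ 2 with M = 2^{r−2}, let f_Z(z|b) = (1/M)·f_{σ,2}(z−b). The map T : [0, 2^{r−1}) → [0, 2^{r−1}) given by T(z) = (1 − z) mod 2^{r−1} is a Lebesgue-measure-preserving involution, and f_Z(z|1) = f_Z(T(z)|0) for every z ∈ [0, 2^{r−1}); hence the equivalent channel is a binary-input memoryless symmetric channel. -/
open MeasureTheory Real Filter

/-- The Gaussian density with zero mean and standard deviation `σ`. -/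
noncomputable def gaussDen (σ x : ℝ) : ℝ :=
  (Real.sqrt (2 * Real.pi * σ ^ 2))⁻¹ * Real.exp (-x ^ 2 / (2 * σ ^ 2))

/-- The `αℤ`-aliased Gaussian density `f_{σ,α}(x) = Σ_{k∈ℤ} g_σ(x − kα)`. -/
noncomputable def aliasedDen (σ α x : ℝ) : ℝ := ∑' k : ℤ, gaussDen σ (x - (k : ℝ) * α)

/-- The differential entropy `h(α,σ)` of the `αℤ`-aliased Gaussian noise
on the fundamental region `[0, α)`. -/
noncomputable def aliasedEnt (α σ : ℝ) : ℝ :=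
  -∫ x in Set.Ico (0 : ℝ) α, aliasedDen σ α x * Real.log (aliasedDen σ α x)

/-- Conditional density `f_Z(z|b) = (1/M)·f_{σ,2}(z − b)`, `M = 2^{r−2}`, of the first
equivalent channel of the binary partition chain `ℤ/2ℤ/⋯/2^{r−1}ℤ` under uniform inputs. -/
noncomputable def eqChDen (σ : ℝ) (r : ℕ) (z b : ℝ) : ℝ :=
  ((1 : ℝ) / 2 ^ (r - 2)) * aliasedDen σ 2 (z - b)

/-!
Modulo `L = 2 ^ (r - 1)` the map `T` is the reflection `z ↦ 1 - z` of the circle `ℝ ⧸ Lℤ`, read in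
the fundamental domain `[0, L)`. A reflection is an involution and preserves Haar measure, which
corresponds to Lebesgue measure on `[0, L)`. The aliased density `f_{σ,2}` is even and
`2`-periodic, hence `L`-periodic because `2 ∣ L`, so
`f_{σ,2}(z - 1) = f_{σ,2}(1 - z) = f_{σ,2}(T z)`.
-/

section ModularReflection

variable {G : Type*} [AddCommGroup G] [LinearOrder G] [IsOrderedAddMonoid G] [Archimedean G]
  {p : G} (hp : 0 < p)

theorem toIcoMod_sub_toIcoMod (a b c x : G) :
    toIcoMod hp a (c - toIcoMod hp b x) = toIcoMod hp a (c - x) := by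
  have shift : c - toIcoMod hp b x = c - x + toIcoDiv hp b x • p := by
    rw [toIcoMod]
    abel
  rw [shift, toIcoMod_add_zsmul]

theorem toIcoMod_sub_toIcoMod_sub_of_mem_Ico {a x : G} (hx : x ∈ Set.Ico a (a + p)) (c : G) :
    toIcoMod hp a (c - toIcoMod hp a (c - x)) = x := by
  rw [toIcoMod_sub_toIcoMod, sub_sub_cancel, (toIcoMod_eq_self hp).mpr hx]

theorem apply_toIcoMod_of_periodic {β : Type*} {f : G → β} (hf : Function.Periodic f p) (a x : G) :
    f (toIcoMod hp a x) = f x :=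
  hf.sub_zsmul_eq _

end ModularReflection

theorem toIcoMod_zero_eq_sub_mul_floor {K : Type*} [Field K] [LinearOrder K]
    [IsStrictOrderedRing K] [FloorRing K] {p : K} (hp : 0 < p) (x : K) :
    toIcoMod hp 0 x = x - p * ⌊x / p⌋ := by
  rw [toIcoMod, toIcoDiv_eq_floor, sub_zero, zsmul_eq_mul, mul_comm]

theorem measurePreserving_addCircle_mk_Ico (p : ℝ) [Fact (0 < p)] (a : ℝ) :
    MeasurePreserving ((↑) : ℝ → AddCircle p) (volume.restrict (Set.Ico a (a + p))) volume := by
  rw [restrict_Ico_eq_restrict_Ioc]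
  exact AddCircle.measurePreserving_mk p a

theorem measurePreserving_addCircle_equivIco (p : ℝ) [Fact (0 < p)] (a : ℝ) :
    MeasurePreserving (fun y : AddCircle p => (AddCircle.equivIco p a y : ℝ)) volume
      (volume.restrict (Set.Ico a (a + p))) := by
  have mk := measurePreserving_addCircle_mk_Ico p a
  have measurable_lift : Measurable fun y : AddCircle p => (AddCircle.equivIco p a y : ℝ) :=
    measurable_subtype_coe.comp (AddCircle.measurableEquivIco p a).measurable
  have lift_mk : (fun y : AddCircle p => (AddCircle.equivIco p a y : ℝ)) ∘ (↑)
      =ᵐ[volume.restrict (Set.Ico a (a + p))] id := by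
    filter_upwards [ae_restrict_mem measurableSet_Ico] with x hx
    exact congrArg Subtype.val (AddCircle.equivIco_coe_eq hx)
  refine ⟨measurable_lift, ?_⟩
  rw [← mk.map_eq, Measure.map_map measurable_lift mk.measurable, Measure.map_congr lift_mk,
    Measure.map_id]

theorem measurePreserving_toIcoMod_sub {p : ℝ} (hp : 0 < p) (a c : ℝ) :
    MeasurePreserving (fun x => toIcoMod hp a (c - x)) (volume.restrict (Set.Ico a (a + p)))
      (volume.restrict (Set.Ico a (a + p))) := by
  have : Fact (0 < p) := ⟨hp⟩
  exact (measurePreserving_addCircle_equivIco p a).comp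
    ((Measure.measurePreserving_sub_left volume (c : AddCircle p)).comp
      (measurePreserving_addCircle_mk_Ico p a))

theorem gaussDen_even (σ : ℝ) : Function.Even (gaussDen σ) := fun x => by
  simp only [gaussDen, neg_sq]

theorem aliasedDen_even (σ α : ℝ) : Function.Even (aliasedDen σ α) := fun x => by
  rw [aliasedDen, aliasedDen, ← (Equiv.neg ℤ).tsum_eq]
  refine tsum_congr fun k => ?_
  rw [← gaussDen_even σ, Equiv.neg_apply]
  congr 1
  push_cast
  ring

theorem aliasedDen_periodic (σ α : ℝ) : Function.Periodic (aliasedDen σ α) α := fun x => by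
  rw [aliasedDen, aliasedDen, ← (Equiv.addRight (1 : ℤ)).tsum_eq]
  refine tsum_congr fun k => ?_
  rw [Equiv.coe_addRight]
  congr 1
  push_cast
  ring

theorem eqChDen_eq_eqChDen_sub (σ : ℝ) (r : ℕ) (z b : ℝ) :
    eqChDen σ r z b = eqChDen σ r (b - z) 0 := by
  rw [eqChDen, eqChDen, sub_zero, ← neg_sub b z, aliasedDen_even]

theorem eqChDen_periodic (σ : ℝ) {r : ℕ} (hr : 2 ≤ r) (b : ℝ) :
    Function.Periodic (fun z => eqChDen σ r z b) (2 ^ (r - 1)) := fun z => by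
  have period_mul : (2 : ℝ) ^ (r - 1) = (2 ^ (r - 2) : ℕ) * 2 := by
    rw [Nat.cast_pow, Nat.cast_ofNat, ← pow_succ, show r - 2 + 1 = r - 1 by omega]
  simp only [eqChDen]
  rw [add_sub_right_comm, period_mul, (aliasedDen_periodic σ 2).nat_mul]

/-- output symmetry of the first equivalent channel: the map
`T(z) = (1 − z) mod 2^{r−1}` is a measure-preserving involution of `[0, 2^{r−1})`
with `f_Z(z|1) = f_Z(T(z)|0)`; hence the channel is a BMS channel. -/
theorem first_equivalent_channel_symmetric (σ : ℝ) (hσ : 0 < σ) (r : ℕ) (hr : 2 ≤ r) :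
    ∀ L : ℝ, L = (2 : ℝ) ^ (r - 1) →
    ∀ T : ℝ → ℝ, (∀ z : ℝ, T z = (1 - z) - L * (⌊(1 - z) / L⌋ : ℝ)) →
      (∀ z ∈ Set.Ico (0 : ℝ) L, T z ∈ Set.Ico (0 : ℝ) L) ∧
      MeasurePreserving T (volume.restrict (Set.Ico (0 : ℝ) L))
        (volume.restrict (Set.Ico (0 : ℝ) L)) ∧
      (∀ z ∈ Set.Ico (0 : ℝ) L, T (T z) = z) ∧
      (∀ z ∈ Set.Ico (0 : ℝ) L, eqChDen σ r z 1 = eqChDen σ r (T z) 0) := by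
  intro L hL T hT
  have L_pos : 0 < L := hL ▸ by positivity
  obtain rfl : T = fun z => toIcoMod L_pos 0 (1 - z) :=
    funext fun z => (hT z).trans (toIcoMod_zero_eq_sub_mul_floor L_pos _).symm
  have density_periodic : Function.Periodic (fun z => eqChDen σ r z 0) L :=
    hL ▸ eqChDen_periodic σ hr 0
  refine ⟨fun z _ => toIcoMod_mem_Ico' L_pos _, ?_, fun z hz => ?_, fun z _ => ?_⟩
  · simpa only [zero_add] using measurePreserving_toIcoMod_sub L_pos 0 1
  · exact toIcoMod_sub_toIcoMod_sub_of_mem_Ico L_pos (by rwa [zero_add]) 1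
  · exact (eqChDen_eq_eqChDen_sub σ r z 1).trans
      (apply_toIcoMod_of_periodic L_pos density_periodic 0 (1 - z)).symm
end

section
/- Condition (i) of the main theorem is achievable by scaling: for every fixed σ > 0, the entropy gap to the uniform distribution vanishes as the lattice becomes fine, i.e., lim_{α→0⁺} ( log α − h(α,σ) ) = 0; equivalently, h(αℤ, σ²) → log V(αℤ) as α → 0. -/
open MeasureTheory Real Filter

/-!
Write `f` for the aliased density. It has mass `1` on `[0, α)`, so Jensen's inequality for
`u ↦ u log u` gives `h(α, σ) ≤ log α`, while `f ≤ M` gives `h(α, σ) ≥ -log M`. By Poisson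
summation, in the form of the functional equation of Mathlib's theta kernels,
`α f(x) = ∑ₙ exp(2πi n x / α) exp(-π n² t) = cosKernel (x / α) t` with `t = 2πσ² / α²`, which is
largest at `x = 0`. Hence the gap `log α - h(α, σ)` lies between `0` and `log (cosKernel 0 t)`,
and `cosKernel 0 t → 1` as `t → ∞`.
-/

section Entropy

variable {X : Type*} {mX : MeasurableSpace X} {μ : Measure X} {f : X → ℝ}

lemma integrable_mul_log_of_mem_Icc [IsFiniteMeasure μ] {M : ℝ}
    (hf_meas : AEStronglyMeasurable f μ) (hf_mem : ∀ᵐ x ∂μ, f x ∈ Set.Icc 0 M) :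
    Integrable (fun x => f x * log (f x)) μ := by
  obtain ⟨B, hB⟩ := isCompact_Icc.exists_bound_of_continuousOn
    (continuous_mul_log.continuousOn (s := Set.Icc 0 M))
  exact .of_bound (continuous_mul_log.comp_aestronglyMeasurable hf_meas) B
    (hf_mem.mono fun x => hB (f x))

lemma neg_log_measureReal_univ_le_integral_mul_log [IsFiniteMeasure μ] (hf_nonneg : 0 ≤ᵐ[μ] f)
    (hf_one : ∫ x, f x ∂μ = 1) (hf_log : Integrable (fun x => f x * log (f x)) μ) :
    -log (μ.real Set.univ) ≤ ∫ x, f x * log (f x) ∂μ := by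
  have hμ : NeZero μ := ⟨by rintro rfl; simp at hf_one⟩
  have hf_int : Integrable f μ := .of_integral_ne_zero (by simp [hf_one])
  have hV : 0 < μ.real Set.univ := measureReal_univ_pos
  have jensen := convexOn_mul_log.map_average_le continuous_mul_log.continuousOn isClosed_Ici
    hf_nonneg hf_int hf_log
  simp only [average_eq, hf_one, smul_eq_mul, mul_one, log_inv] at jensen
  exact le_of_mul_le_mul_left jensen (inv_pos.2 hV)

lemma integral_mul_log_le_log_of_le {M : ℝ} (hf_nonneg : 0 ≤ᵐ[μ] f) (hf_le : ∀ᵐ x ∂μ, f x ≤ M)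
    (hf_one : ∫ x, f x ∂μ = 1) (hf_log : Integrable (fun x => f x * log (f x)) μ) :
    ∫ x, f x * log (f x) ∂μ ≤ log M := by
  have hf_int : Integrable f μ := .of_integral_ne_zero (by simp [hf_one])
  calc ∫ x, f x * log (f x) ∂μ
      ≤ ∫ x, f x * log M ∂μ := by
        refine integral_mono_ae hf_log (hf_int.mul_const _) ?_
        filter_upwards [hf_nonneg, hf_le] with x hx_nonneg hx_le
        rcases hx_nonneg.eq_or_lt with hx_zero | hx_pos
        · simp [← hx_zero]
        · exact mul_le_mul_of_nonneg_left (log_le_log hx_pos hx_le) hx_nonneg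
    _ = log M := by rw [integral_mul_const, hf_one, one_mul]

end Entropy

section Periodization

variable {E : Type*} [NormedAddCommGroup E] [NormedSpace ℝ E] {g : ℝ → E} {α : ℝ}

lemma hasSum_setIntegral_Ico_comp_sub_int_mul (hg : Integrable g) (hα : 0 < α) :
    HasSum (fun k : ℤ => ∫ x in Set.Ico 0 α, g (x - k * α)) (∫ x, g x) := by
  have translate (n : ℤ) : ∫ x in Set.Ico (n • α) ((n + 1) • α), g x =
      ∫ x in Set.Ico 0 α, g (x - (-n : ℤ) * α) := by
    rw [← (measurePreserving_add_right volume (n • α)).setIntegral_preimage_emb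
      (measurableEmbedding_addRight _), Set.preimage_add_const_Ico]
    simp [add_mul]
  have cells : HasSum (fun n : ℤ => ∫ x in Set.Ico (n • α) ((n + 1) • α), g x) (∫ x, g x) := by
    have := hasSum_integral_iUnion (μ := volume) (f := g) (fun n : ℤ => measurableSet_Ico)
      (Set.pairwise_disjoint_Ico_zsmul α) hg.integrableOn
    rwa [iUnion_Ico_zsmul hα, setIntegral_univ] at this
  simp only [translate] at cells
  exact (Equiv.neg ℤ).hasSum_iff.1 cells

lemma setIntegral_Ico_tsum_comp_sub_int_mul (hg : Integrable g) (hα : 0 < α) :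
    ∫ x in Set.Ico 0 α, ∑' k : ℤ, g (x - k * α) = ∫ x, g x := by
  rw [← integral_tsum_of_summable_integral_norm
    (fun k => (hg.comp_sub_right _).integrableOn)
    (hasSum_setIntegral_Ico_comp_sub_int_mul hg.norm hα).summable]
  exact (hasSum_setIntegral_Ico_comp_sub_int_mul hg hα).tsum_eq

end Periodization

section CosKernel

open HurwitzZeta

lemma hasSum_int_cosKernel_zero {t : ℝ} (ht : 0 < t) :
    HasSum (fun n : ℤ => rexp (-π * n ^ 2 * t)) (cosKernel 0 t) := by
  simpa [evenKernel_eq_cosKernel_of_zero] using hasSum_int_evenKernel 0 ht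

lemma cosKernel_zero_pos {t : ℝ} (ht : 0 < t) : 0 < cosKernel 0 t := by
  have sum := hasSum_int_cosKernel_zero ht
  rw [← sum.tsum_eq]
  exact sum.summable.tsum_pos (fun _ => (exp_pos _).le) 0 (exp_pos _)

lemma cosKernel_le_cosKernel_zero (a : UnitAddCircle) {t : ℝ} (ht : 0 < t) :
    cosKernel a t ≤ cosKernel 0 t := by
  induction a using QuotientAddGroup.induction_on with | H a =>
  have norm_term (n : ℤ) :
      ‖Complex.exp (2 * π * Complex.I * a * n) * rexp (-π * n ^ 2 * t)‖ =
        rexp (-π * n ^ 2 * t) := by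
    rw [norm_mul, Complex.norm_real, norm_of_nonneg (exp_pos _).le, Complex.norm_exp]
    simp
  calc cosKernel a t
      ≤ ‖(cosKernel a t : ℂ)‖ := by
        rw [Complex.norm_real]
        exact le_norm_self _
    _ ≤ cosKernel 0 t := by
        rw [← (hasSum_int_cosKernel a ht).tsum_eq]
        exact tsum_of_norm_bounded (hasSum_int_cosKernel_zero ht) fun n => (norm_term n).le

lemma tendsto_cosKernel_atTop (a : UnitAddCircle) :
    Tendsto (cosKernel a) atTop (nhds 1) := by
  obtain ⟨p, hp, hO⟩ := isBigO_atTop_cosKernel_sub a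
  have decay : Tendsto (fun t => rexp (-p * t)) atTop (nhds 0) :=
    tendsto_exp_atBot.comp (tendsto_id.const_mul_atTop_of_neg (neg_lt_zero.2 hp))
  simpa using (hO.trans_tendsto decay).add_const 1

end CosKernel

lemma tendsto_const_div_sq_nhdsGT_zero {c : ℝ} (hc : 0 < c) :
    Tendsto (fun x : ℝ => c / x ^ 2) (nhdsWithin 0 (Set.Ioi 0)) atTop := by
  have inv_sq : Tendsto (fun x : ℝ => x⁻¹ ^ 2) (nhdsWithin 0 (Set.Ioi 0)) atTop :=
    (tendsto_pow_atTop two_ne_zero).comp tendsto_inv_nhdsGT_zero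
  simpa only [div_eq_mul_inv, inv_pow] using inv_sq.const_mul_atTop hc

section AliasedGaussian

open HurwitzZeta ProbabilityTheory

variable {σ α : ℝ}

lemma gaussDen_eq_gaussianPDFReal (σ : ℝ) : gaussDen σ = gaussianPDFReal 0 (nnabs σ ^ 2) := by
  ext x
  simp [gaussDen, gaussianPDFReal]

lemma aliasedDen_nonneg (σ α x : ℝ) : 0 ≤ aliasedDen σ α x :=
  tsum_nonneg fun k => by rw [gaussDen_eq_gaussianPDFReal]; exact gaussianPDFReal_nonneg ..

lemma setIntegral_aliasedDen (hσ : σ ≠ 0) (hα : 0 < α) :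
    ∫ x in Set.Ico 0 α, aliasedDen σ α x = 1 := by
  simp only [aliasedDen, gaussDen_eq_gaussianPDFReal]
  rw [setIntegral_Ico_tsum_comp_sub_int_mul (integrable_gaussianPDFReal ..) hα]
  exact integral_gaussianPDFReal_eq_one 0 (by simpa using hσ)

lemma aliasedDen_eq_evenKernel (hσ : σ ≠ 0) (hα : α ≠ 0) (x : ℝ) :
    aliasedDen σ α x =
      (√(2 * π * σ ^ 2))⁻¹ * evenKernel ↑(x / α) (α ^ 2 / (2 * π * σ ^ 2)) := by
  have kernel := (hasSum_int_evenKernel (-(x / α))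
    (show 0 < α ^ 2 / (2 * π * σ ^ 2) by positivity)).tsum_eq
  rw [AddCircle.coe_neg, evenKernel_neg] at kernel
  rw [← kernel, ← tsum_mul_left, aliasedDen]
  refine tsum_congr fun k => ?_
  rw [gaussDen]
  congr 2
  field_simp
  ring

lemma aliasedDen_eq_cosKernel_div (hσ : σ ≠ 0) (hα : 0 < α) (x : ℝ) :
    aliasedDen σ α x = cosKernel ↑(x / α) (2 * π * σ ^ 2 / α ^ 2) / α := by
  rw [aliasedDen_eq_evenKernel hσ hα.ne', evenKernel_functional_equation, ← sqrt_eq_rpow,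
    one_div_div, sqrt_div (by positivity), sqrt_sq hα.le]
  field_simp

lemma aliasedDen_le_cosKernel_zero_div (hσ : σ ≠ 0) (hα : 0 < α) (x : ℝ) :
    aliasedDen σ α x ≤ cosKernel 0 (2 * π * σ ^ 2 / α ^ 2) / α := by
  rw [aliasedDen_eq_cosKernel_div hσ hα]
  gcongr
  exact cosKernel_le_cosKernel_zero _ (by positivity)

lemma integrableOn_aliasedDen_mul_log (hσ : σ ≠ 0) (hα : 0 < α) :
    IntegrableOn (fun x => aliasedDen σ α x * log (aliasedDen σ α x)) (Set.Ico 0 α) := by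
  have integrable : IntegrableOn (aliasedDen σ α) (Set.Ico 0 α) :=
    .of_integral_ne_zero (by simp [setIntegral_aliasedDen hσ hα])
  exact integrable_mul_log_of_mem_Icc integrable.aestronglyMeasurable
    (.of_forall fun x => ⟨aliasedDen_nonneg σ α x, aliasedDen_le_cosKernel_zero_div hσ hα x⟩)

lemma aliasedEnt_le_log (hσ : σ ≠ 0) (hα : 0 < α) : aliasedEnt α σ ≤ log α := by
  have jensen := neg_log_measureReal_univ_le_integral_mul_log
    (.of_forall (aliasedDen_nonneg σ α)) (setIntegral_aliasedDen hσ hα)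
    (integrableOn_aliasedDen_mul_log hσ hα)
  rw [measureReal_restrict_apply_univ, volume_real_Ico_of_le hα.le, sub_zero] at jensen
  exact neg_le.1 jensen

lemma log_sub_log_cosKernel_le_aliasedEnt (hσ : σ ≠ 0) (hα : 0 < α) :
    log α - log (cosKernel 0 (2 * π * σ ^ 2 / α ^ 2)) ≤ aliasedEnt α σ := by
  have upper := integral_mul_log_le_log_of_le
    (.of_forall (aliasedDen_nonneg σ α)) (.of_forall (aliasedDen_le_cosKernel_zero_div hσ hα))
    (setIntegral_aliasedDen hσ hα) (integrableOn_aliasedDen_mul_log hσ hα)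
  rw [log_div (cosKernel_zero_pos (by positivity)).ne' hα.ne'] at upper
  rw [aliasedEnt]
  linarith

end AliasedGaussian

/-- condition (i) of the main theorem is achievable by scaling: for fixed
`σ > 0`, the entropy gap to the uniform distribution vanishes as the lattice becomes fine:
`log α − h(α,σ) → 0` as `α → 0⁺`, i.e. `h(αℤ, σ²) → log V(αℤ)`. -/
theorem entropy_gap_to_uniform_tendsto_zero (σ : ℝ) (hσ : 0 < σ) :
    Filter.Tendsto (fun α : ℝ => Real.log α - aliasedEnt α σ)
      (nhdsWithin 0 (Set.Ioi 0)) (nhds 0) := by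
  have gap_bound : Tendsto (fun α => log (HurwitzZeta.cosKernel 0 (2 * π * σ ^ 2 / α ^ 2)))
      (nhdsWithin 0 (Set.Ioi 0)) (nhds 0) := by
    have scale := tendsto_const_div_sq_nhdsGT_zero (show 0 < 2 * π * σ ^ 2 by positivity)
    simpa using ((tendsto_cosKernel_atTop 0).comp scale).log one_ne_zero
  refine tendsto_of_tendsto_of_tendsto_of_le_of_le' tendsto_const_nhds gap_bound ?_ ?_
  · filter_upwards [self_mem_nhdsWithin] with α hα
    exact sub_nonneg.2 (aliasedEnt_le_log hσ.ne' hα)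
  · filter_upwards [self_mem_nhdsWithin] with α hα
    exact sub_le_comm.1 (log_sub_log_cosKernel_le_aliasedEnt hσ.ne' hα)
end
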